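/- arXiv:2403.07728 — 3 statements merged into one kernel-verified Lean document; each statement's English description precedes it below -/
import Mathlib

section
/- Let x_1, …, x_n, x_{n+1} be pairwise distinct real numbers. For r ∈ [n] let x_(r) denote the r-th smallest value of {x_i : i ∈ [n]}, with the conventions x_(0) = −∞ and x_(n+1) = +∞ in the extended reals, and for j ∈ [n] let x_(r)^{j←(n+1)} denote the r-th smallest value of {x_i : i ∈ [n], i ≠ j} ∪ {x_{n+1}}. Then for every r ∈ [n] and j ∈ [n]: |x_(r)^{j←(n+1)} − x_(r)| ≤ max{ x_(r) − x_(r−1), x_(r+1) − x_(r) }, where the inequality is interpreted in the extended reals. -/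
open scoped Classical

noncomputable section

/-- The `k`-th smallest element (1-based) of a finite multiset of real numbers
(the `k`-th order statistic). -/
def kth (s : Multiset ℝ) (k : ℕ) : ℝ := (s.sort (· ≤ ·)).getD (k - 1) 0

/-- The `r`-th order statistic of a multiset of `n` reals, as an extended real number, with the
conventions that the `0`-th order statistic is `-∞` and the `r`-th order statistic is `+∞`
whenever `r` exceeds the number of elements. -/
def kthE (s : Multiset ℝ) (r : ℕ) : EReal :=
  if r = 0 then ⊥ else if r ≤ Multiset.card s then ((kth s r : ℝ) : EReal) else ⊤

theorem aux_list (a : ℝ) : ∀ (l : List ℝ), l.Pairwise (· ≤ ·) → ∀ k, k < l.length →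
    (l.getD k 0 ≤ a ↔ k + 1 ≤ l.countP (fun b => decide (b ≤ a))) := by
  intro l
  induction l with
  | nil => intro _ k hk; simp at hk
  | cons b t ih =>
    intro hs k hk
    rw [List.pairwise_cons] at hs
    have hz : ¬ b ≤ a → t.countP (fun b => decide (b ≤ a)) = 0 := by
      intro hb
      rw [List.countP_eq_zero]
      intro c hc
      have := hs.1 c hc
      simp only [decide_eq_true_eq]
      intro h
      exact hb (this.trans h)
    rw [List.countP_cons]
    cases k with
    | zero =>
      by_cases hb : b ≤ a
      · simp [hb]
      · simp [hb, hz hb]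
    | succ k =>
      have hk' : k < t.length := by simpa using hk
      have := ih hs.2 k hk'
      rw [List.getD_cons_succ, this]
      by_cases hb : b ≤ a
      · simp [hb]
      · simp [hb, hz hb]

theorem aux_kth (s : Multiset ℝ) (k : ℕ) (h1 : 1 ≤ k) (h2 : k ≤ Multiset.card s) (a : ℝ) :
    kth s k ≤ a ↔ k ≤ s.countP (fun b => b ≤ a) := by
  unfold kth
  have h := aux_list a (s.sort (· ≤ ·)) (s.pairwise_sort (· ≤ ·)) (k - 1)
    (by rw [Multiset.length_sort]; omega)
  rw [h, Nat.sub_add_cancel h1]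
  conv_rhs => rw [← Multiset.sort_eq s (· ≤ ·), Multiset.coe_countP]

theorem aux_swap (t : Multiset ℝ) (y z : ℝ) (k : ℕ) (h1 : 1 ≤ k)
    (h2 : k + 1 ≤ Multiset.card t + 1) :
    kth (y ::ₘ t) k ≤ kth (z ::ₘ t) (k + 1) := by
  rw [aux_kth _ _ h1 (by rw [Multiset.card_cons]; omega)]
  have h := (aux_kth (z ::ₘ t) (k + 1) (by omega) (by rw [Multiset.card_cons]; omega) _).1 le_rfl
  rw [Multiset.countP_cons] at h ⊢
  split_ifs at h ⊢ <;> omega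

/-- **Order-statistic perturbation bound under swapping one point.**
Let `x 1, …, x n, x (n+1)` be pairwise distinct reals.  For `r, j ∈ [n]`, the `r`-th smallest
value of `{x i : i ∈ [n], i ≠ j} ∪ {x (n+1)}` differs from the `r`-th smallest value `x_(r)` of
`{x i : i ∈ [n]}` by at most `max { x_(r) - x_(r-1), x_(r+1) - x_(r) }`, where `x_(0) = -∞` and
`x_(n+1) = +∞` in the extended reals. -/
theorem order_stat_swap_one (n : ℕ) (x : ℕ → ℝ)
    (hdist : Set.InjOn x (Set.Icc 1 (n + 1)))
    (r j : ℕ) (hr : r ∈ Finset.Icc 1 n) (hj : j ∈ Finset.Icc 1 n) :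
    ((|kth (x (n + 1) ::ₘ Multiset.map x ((Finset.Icc 1 n).erase j).val) r
        - kth (Multiset.map x (Finset.Icc 1 n).val) r| : ℝ) : EReal)
      ≤ max
          (kthE (Multiset.map x (Finset.Icc 1 n).val) r
            - kthE (Multiset.map x (Finset.Icc 1 n).val) (r - 1))
          (kthE (Multiset.map x (Finset.Icc 1 n).val) (r + 1)
            - kthE (Multiset.map x (Finset.Icc 1 n).val) r) := by
  rw [Finset.mem_Icc] at hr
  obtain ⟨t, ht, ht'⟩ : ∃ t, t = Multiset.map x ((Finset.Icc 1 n).erase j).val ∧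
      Multiset.map x (Finset.Icc 1 n).val = x j ::ₘ t := by
    refine ⟨_, rfl, ?_⟩
    rw [← Multiset.map_cons, Finset.erase_val, Multiset.cons_erase hj]
  have hc : Multiset.card t + 1 = n := by
    have := congrArg Multiset.card ht'
    simpa using this.symm
  rw [← ht, ht']
  have hcs : Multiset.card (x j ::ₘ t) = n := by rw [Multiset.card_cons, hc]
  have e0 : kthE (x j ::ₘ t) r = (kth (x j ::ₘ t) r : ℝ) := by
    unfold kthE
    rw [if_neg (by omega), if_pos (by omega)]
  rw [e0]
  by_cases hr1 : r = 1
  · subst hr1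
    simp [kthE]
  by_cases hrn : r = n
  · have : kthE (x j ::ₘ t) (r + 1) = ⊤ := by
      unfold kthE
      rw [if_neg (by omega), if_neg (by omega)]
    simp [this]
  have e1 : kthE (x j ::ₘ t) (r - 1) = (kth (x j ::ₘ t) (r - 1) : ℝ) := by
    unfold kthE
    rw [if_neg (by omega), if_pos (by omega)]
  have e2 : kthE (x j ::ₘ t) (r + 1) = (kth (x j ::ₘ t) (r + 1) : ℝ) := by
    unfold kthE
    rw [if_neg (by omega), if_pos (by omega)]
  rw [e1, e2]
  have a1 := aux_swap t (x (n + 1)) (x j) r (by omega) (by omega)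
  have a2 := aux_swap t (x j) (x (n + 1)) (r - 1) (by omega) (by omega)
  rw [Nat.sub_add_cancel hr.1] at a2
  rw [← EReal.coe_sub, ← EReal.coe_sub, le_max_iff, EReal.coe_le_coe_iff, EReal.coe_le_coe_iff]
  rcases abs_cases (kth (x (n + 1) ::ₘ t) r - kth (x j ::ₘ t) r) with h | h
  · right; linarith
  · left; linarith

end
end

section
/- Let C be a nonempty finite index set, let {R_i}_{i∈C} and R_t be real numbers, and let α ∈ (0,1). Let Q denote the ⌈(1−α)(|C|+1)⌉-th smallest value of the multiset {R_i : i ∈ C ∪ {t}}. Then (i) the upper bound 1{R_t > Q} ≤ α + (1/(|C|+1)) · Σ_{s∈C} ( 1{R_t > Q} − 1{R_s > Q} ) holds; and (ii) if the values {R_i}_{i∈C∪{t}} are pairwise distinct, the lower bound 1{R_t > Q} ≥ α − 1/(|C|+1) + (1/(|C|+1)) · Σ_{s∈C} ( 1{R_t > Q} − 1{R_s > Q} ) also holds. Both inequalities hold deterministically. -/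
open scoped Classical

noncomputable section

theorem countP_sorted_aux (l : List ℝ) (hs : l.Pairwise (· ≤ ·)) (k : ℕ) (hk : 1 ≤ k)
    (hkl : k ≤ l.length) :
    l.countP (fun x => decide (l.getD (k - 1) 0 < x)) ≤ l.length - k ∧
    (l.Nodup → l.countP (fun x => decide (l.getD (k - 1) 0 < x)) = l.length - k) := by
  have hlt : k - 1 < l.length := by omega
  have hq : l.getD (k - 1) 0 = l[k - 1] := by simp [List.getD_eq_getElem?_getD, hlt]
  rw [hq]
  have hsplit : l.countP (fun x => decide (l[k - 1] < x)) =
      (l.drop k).countP (fun x => decide (l[k - 1] < x)) := by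
    have h0 : (l.take k).countP (fun x => decide (l[k - 1] < x)) = 0 := by
      rw [List.countP_eq_zero]
      intro a ha
      obtain ⟨i, hi, rfl⟩ := List.mem_iff_getElem.1 ha
      rw [List.length_take] at hi
      simp only [List.getElem_take, decide_eq_true_eq, not_lt]
      rcases Nat.lt_or_ge i (k - 1) with h | h
      · exact List.pairwise_iff_getElem.1 hs _ _ _ _ h
      · have : i = k - 1 := by omega
        subst this
        exact le_rfl
    have happ := List.countP_append (p := fun x => decide (l[k - 1] < x))
      (l₁ := l.take k) (l₂ := l.drop k)
    rw [List.take_append_drop, h0, zero_add] at happ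
    exact happ
  rw [hsplit]
  refine ⟨(List.countP_le_length).trans (by simp), fun hn => ?_⟩
  rw [← List.length_drop, List.countP_eq_length]
  intro a ha
  obtain ⟨i, hi, rfl⟩ := List.mem_iff_getElem.1 ha
  rw [List.length_drop] at hi
  simp only [List.getElem_drop, decide_eq_true_eq]
  refine lt_of_le_of_ne (List.pairwise_iff_getElem.1 hs _ _ _ _ (by omega)) ?_
  intro h
  have := (List.Nodup.getElem_inj_iff hn).1 h
  omega

/-- **Deterministic miscoverage-indicator bounds.**
Let `C` be a nonempty finite index set, `t ∉ C`, `{R i}` reals and `α ∈ (0,1)`.  Let `Q` be the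
`⌈(1-α)(|C|+1)⌉`-th smallest value of `{R i : i ∈ C ∪ {t}}`.  Then
(i) `1{R t > Q} ≤ α + (1/(|C|+1)) ∑_{s ∈ C} (1{R t > Q} - 1{R s > Q})`, and
(ii) if the values `{R i}_{i ∈ C ∪ {t}}` are pairwise distinct,
`1{R t > Q} ≥ α - 1/(|C|+1) + (1/(|C|+1)) ∑_{s ∈ C} (1{R t > Q} - 1{R s > Q})`.
Both inequalities hold deterministically. -/
theorem miscoverage_indicator_bounds {ι : Type*} (C : Finset ι) (hC : C.Nonempty)
    (t : ι) (ht : t ∉ C) (R : ι → ℝ) (α : ℝ) (hα0 : 0 < α) (hα1 : α < 1) :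
    (let Q : ℝ := kth (Multiset.map R (insert t C).val) ⌈(1 - α) * ((C.card : ℝ) + 1)⌉₊
    ((if Q < R t then (1 : ℝ) else 0) ≤
        α + (1 / ((C.card : ℝ) + 1)) *
          ∑ s ∈ C, ((if Q < R t then (1 : ℝ) else 0) - (if Q < R s then (1 : ℝ) else 0)))
    ∧ (Set.InjOn R (↑(insert t C) : Set ι) →
        α - 1 / ((C.card : ℝ) + 1) + (1 / ((C.card : ℝ) + 1)) *
            ∑ s ∈ C, ((if Q < R t then (1 : ℝ) else 0) - (if Q < R s then (1 : ℝ) else 0))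
          ≤ (if Q < R t then (1 : ℝ) else 0))) := by
  intro Q
  have hN : (0 : ℝ) < (C.card : ℝ) + 1 := by positivity
  set k := ⌈(1 - α) * ((C.card : ℝ) + 1)⌉₊ with hk
  have hpos : 0 < (1 - α) * ((C.card : ℝ) + 1) := mul_pos (by linarith) hN
  have hk1 : 1 ≤ k := Nat.ceil_pos.2 hpos
  have hkN : k ≤ C.card + 1 := by
    apply Nat.ceil_le.2
    push_cast
    nlinarith
  have hkl : (1 - α) * ((C.card : ℝ) + 1) ≤ k := Nat.le_ceil _
  have hku : (k : ℝ) < (1 - α) * ((C.card : ℝ) + 1) + 1 := Nat.ceil_lt_add_one hpos.le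
  set m : Multiset ℝ := Multiset.map R (insert t C).val with hm
  have hcard : (m.sort (· ≤ ·)).length = C.card + 1 := by
    rw [Multiset.length_sort, hm, Multiset.card_map, Finset.card_val,
      Finset.card_insert_of_notMem ht]
  have haux := countP_sorted_aux (m.sort (· ≤ ·)) (Multiset.pairwise_sort m (· ≤ ·)) k hk1
    (by rw [hcard]; exact hkN)
  have hQ : (m.sort (· ≤ ·)).getD (k - 1) 0 = Q := rfl
  rw [hQ, hcard] at haux
  have hcount : (((m.sort (· ≤ ·)).countP (fun x => decide (Q < x)) : ℕ) : ℝ) =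
      (if Q < R t then (1 : ℝ) else 0) + ∑ s ∈ C, (if Q < R s then (1 : ℝ) else 0) := by
    rw [← Finset.sum_insert (f := fun s => if Q < R s then (1 : ℝ) else 0) ht,
      Finset.sum_boole]
    norm_cast
    rw [← Multiset.coe_countP, Multiset.sort_eq, hm, Multiset.countP_map]
    rfl
  have hnk : ((C.card + 1 - k : ℕ) : ℝ) = (C.card : ℝ) + 1 - k := by
    rw [Nat.cast_sub hkN]
    push_cast
    rfl
  have hsum : ∑ s ∈ C, ((if Q < R t then (1 : ℝ) else 0) - (if Q < R s then (1 : ℝ) else 0)) =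
      ((C.card : ℝ) + 1) * (if Q < R t then (1 : ℝ) else 0)
        - ((m.sort (· ≤ ·)).countP (fun x => decide (Q < x)) : ℕ) := by
    rw [hcount, Finset.sum_sub_distrib, Finset.sum_const, nsmul_eq_mul]
    ring
  rw [hsum]
  generalize (if Q < R t then (1 : ℝ) else 0) = x
  have hx : ∀ M : ℝ, 1 / ((C.card : ℝ) + 1) * (((C.card : ℝ) + 1) * x - M) =
      x - M / ((C.card : ℝ) + 1) := by
    intro M
    field_simp
  rw [hx]
  constructor
  · have h1 : (((m.sort (· ≤ ·)).countP (fun x => decide (Q < x)) : ℕ) : ℝ) ≤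
        (C.card : ℝ) + 1 - k := by
      rw [← hnk]
      exact_mod_cast haux.1
    have h2 : (((m.sort (· ≤ ·)).countP (fun x => decide (Q < x)) : ℕ) : ℝ) /
        ((C.card : ℝ) + 1) ≤ α := by
      rw [div_le_iff₀ hN]
      linarith
    linarith
  · intro hinj
    have hnd : (m.sort (· ≤ ·)).Nodup := by
      rw [← Multiset.coe_nodup, Multiset.sort_eq, hm]
      exact Multiset.Nodup.map_on (fun a ha b hb h => hinj ha hb h) (insert t C).nodup
    rw [haux.2 hnd, hnk]
    have h2 : α - 1 / ((C.card : ℝ) + 1) ≤ ((C.card : ℝ) + 1 - k) / ((C.card : ℝ) + 1) := by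
      rw [sub_le_iff_le_add, ← add_div, le_div_iff₀ hN]
      linarith
    linarith

end
end

section
/- Let α ∈ (0,1), γ > 0, and let (α_m)_{m≥0} be a real sequence with α_0 ∈ [0,1] satisfying the recursion α_{m+1} = α_m + γ·(α − err_m), where each err_m ∈ {0,1} satisfies err_m = 0 whenever α_m ≤ 0 and err_m = 1 whenever α_m ≥ 1. Then α_m ∈ [−γ, 1+γ] for every m ≥ 0. -/
/-- **Boundedness of the adaptive conformal inference iterates.**
Let `α ∈ (0,1)`, `γ > 0`, and let `(α_m)` satisfy `α_{m+1} = α_m + γ (α - err_m)` with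
`α_0 ∈ [0,1]`, where each `err_m ∈ {0,1}`, `err_m = 0` whenever `α_m ≤ 0` and `err_m = 1`
whenever `α_m ≥ 1`.  Then `α_m ∈ [-γ, 1 + γ]` for every `m`. -/
theorem aci_iterates_bounded (α γ : ℝ) (hα0 : 0 < α) (hα1 : α < 1) (hγ : 0 < γ)
    (a : ℕ → ℝ) (err : ℕ → ℝ)
    (ha0 : a 0 ∈ Set.Icc (0 : ℝ) 1)
    (herr : ∀ m, err m = 0 ∨ err m = 1)
    (herr0 : ∀ m, a m ≤ 0 → err m = 0)
    (herr1 : ∀ m, 1 ≤ a m → err m = 1)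
    (hrec : ∀ m, a (m + 1) = a m + γ * (α - err m)) :
    ∀ m, a m ∈ Set.Icc (-γ) (1 + γ) := by
  have h1 : 0 < γ * α := mul_pos hγ hα0
  have h2 : γ * α < γ := by nlinarith
  intro m
  induction m with
  | zero => exact ⟨by linarith [ha0.1], by linarith [ha0.2]⟩
  | succ k ih =>
    obtain ⟨hl, hu⟩ := ih
    rw [hrec k]
    rcases herr k with h | h
    · have hlt : a k < 1 := by
        by_contra hc
        have := herr1 k (not_lt.mp hc)
        linarith
      rw [h]
      exact ⟨by linarith, by linarith⟩
    · have hgt : 0 < a k := by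
        by_contra hc
        have := herr0 k (not_lt.mp hc)
        linarith
      rw [h]
      exact ⟨by linarith, by linarith⟩
end
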